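/- Let F be a Finsler function on ℝⁿ and let X : ℝⁿ → ℝⁿ be a smooth complete vector field with flow φ : ℝ × ℝⁿ → ℝⁿ (so ∂φ/∂s(s,p) = X(φ(s,p)) and φ(0,p) = p). Then the flow of X takes geodesics into geodesics as point sets — i.e. for every geodesic γ of (ℝⁿ, F) and every s ∈ ℝ the curve t ↦ φ(s, γ(t)) is a pregeodesic of (ℝⁿ, F) — if and only if there exist smooth functions C^1, …, C^n on ℝⁿ × (ℝⁿ ∖ {0}) satisfying ∑_k ∂²F/∂y^k∂y^i·C^k = ∂F/∂x^i − ∑_k ∂²F/∂x^k∂y^i·y^k for every i, such that for every index i and every (x,y) with y ≠ 0: ∑_s [ ∂²F/∂x^s∂x^i − ∑_k ∂³F/∂x^s∂x^k∂y^i·y^k − ∑_k ∂³F/∂x^s∂y^k∂y^i·C^k ]·X^s + ∑_{s,r} [ (∂²F/∂y^s∂x^i − ∂²F/∂y^i∂x^s)·y^r − ∂²F/∂y^s∂y^i·C^r − ( ∑_k ∂³F/∂y^s∂x^k∂y^i·y^k + ∑_k ∂³F/∂y^s∂y^k∂y^i·C^k )·y^r ]·(∂X^s/∂x^r) − ∑_{s,m,r}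 (∂²F/∂y^s∂y^i)·y^m·y^r·(∂²X^s/∂x^m∂x^r) = 0, where all derivatives of F and the functions C^k are evaluated at (x,y) and X and its derivatives at x. -/

import Mathlib

open scoped BigOperators Topology
noncomputable section

abbrev E (n : ℕ) := Fin n → ℝ

/-- Partial derivative with respect to the base coordinate `x^i`. -/
def pdx {n : ℕ} (i : Fin n) (f : E n × E n → ℝ) (p : E n × E n) : ℝ :=
  fderiv ℝ f p (Pi.single i 1, 0)

/-- Partial derivative with respect to the fibre coordinate `y^i`. -/
def pdy {n : ℕ} (i : Fin n) (f : E n × E n → ℝ) (p : E n × E n) : ℝ :=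
  fderiv ℝ f p (0, Pi.single i 1)

/-- A Finsler function on `ℝⁿ`. -/
structure IsFinsler {n : ℕ} (F : E n × E n → ℝ) : Prop where
  smooth : ContDiffOn ℝ (⊤ : ℕ∞) F {p : E n × E n | p.2 ≠ 0}
  homog : ∀ (x y : E n) (c : ℝ), 0 < c → F (x, c • y) = c * F (x, y)
  pos : ∀ (x y : E n), y ≠ 0 → 0 < F (x, y)
  posDef : ∀ (x y : E n), y ≠ 0 →
    (Matrix.of fun i j : Fin n =>
      (1 / 2) * pdy i (pdy j (fun p => F p ^ 2)) (x, y)).PosDef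

/-- A geodesic of `(ℝⁿ, F)`: a `C²` curve on a nontrivial open interval, with nowhere
vanishing velocity, positive constant speed, satisfying the Euler–Lagrange equations. -/
structure IsGeodesic {n : ℕ} (F : E n × E n → ℝ) (γ : ℝ → E n) (t₁ t₂ : ℝ) : Prop where
  lt : t₁ < t₂
  smooth : ContDiffOn ℝ 2 γ (Set.Ioo t₁ t₂)
  vel : ∀ t ∈ Set.Ioo t₁ t₂, deriv γ t ≠ 0
  constSpeed : ∃ c : ℝ, 0 < c ∧ ∀ t ∈ Set.Ioo t₁ t₂, F (γ t, deriv γ t) = c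
  eulerLagrange : ∀ (i : Fin n), ∀ t ∈ Set.Ioo t₁ t₂,
    deriv (fun s => pdy i F (γ s, deriv γ s)) t = pdx i F (γ t, deriv γ t)

/-- The Hamel equations in the standard coordinates. -/
def SatisfiesHamel {n : ℕ} (F : E n × E n → ℝ) : Prop :=
  ∀ (x y : E n), y ≠ 0 → ∀ i : Fin n,
    ∑ k, pdx k (pdy i F) (x, y) * y k = ∑ k, pdx i (pdy k F) (x, y) * y k

/-- `(ℝⁿ, F)` is rectilinear in the standard coordinates. -/
def Rectilinear {n : ℕ} (F : E n × E n → ℝ) : Prop :=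
  ∀ (γ : ℝ → E n) (t₁ t₂ : ℝ), IsGeodesic F γ t₁ t₂ →
    ∃ (f : ℝ → ℝ) (a b : E n), a ≠ 0 ∧
      ContDiffOn ℝ 2 f (Set.Ioo t₁ t₂) ∧
      (∀ t ∈ Set.Ioo t₁ t₂, 0 < deriv f t) ∧
      ∀ t ∈ Set.Ioo t₁ t₂, γ t = f t • a + b

/-- A pregeodesic: a `C²` curve with nowhere vanishing velocity satisfying the
parametrization-free Euler–Lagrange equations of the length functional. -/
def IsPregeodesic {n : ℕ} (F : E n × E n → ℝ) (c : ℝ → E n) (t₁ t₂ : ℝ) : Prop :=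
  t₁ < t₂ ∧ ContDiffOn ℝ 2 c (Set.Ioo t₁ t₂) ∧
  (∀ t ∈ Set.Ioo t₁ t₂, deriv c t ≠ 0) ∧
  ∀ (i : Fin n), ∀ t ∈ Set.Ioo t₁ t₂,
    pdx i F (c t, deriv c t) =
      (∑ k, pdx k (pdy i F) (c t, deriv c t) * deriv c t k) +
      (∑ k, pdy k (pdy i F) (c t, deriv c t) * deriv (fun s => deriv c s k) t)

/-!
For a jet `p = (x, y)` and an acceleration `w`, let `EL p w` denote the covector `F_x - d/dt F_y`;
it is affine in `w` with linear part `-F_yy`, and the kernel of `F_yy` at `p` is the line `ℝ y`.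
The tangent flow `Tφ` is the flow of the complete lift `Xᶜ`, and differentiating `EL` along the
second prolongation of `X` gives exactly the left-hand side of the Killing system.

`⇒` The acceleration of the geodesic with initial jet `p` is the spray `S p`. As its images under
the flow are pregeodesics, `EL` vanishes along the transported jet for all times `s`, and the
derivative at `s = 0` is the Killing system for `C = S`.

`⇐` The Killing system says that `F_yy` annihilates the fibre part of the bracket `[Xᶜ, (y, C)]`,
so this bracket is `f y` for a function `f`. The difference between the transported acceleration
and `C` along the lifted flow then solves `v' = DX v - f y`. It starts on the line `ℝ y` and stays
there because `y' = DX y`, so `EL` keeps vanishing.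
-/

open scoped ContDiff Matrix
open Set

section Calculus

variable {V W : Type*} [NormedAddCommGroup V] [NormedSpace ℝ V]
  [NormedAddCommGroup W] [NormedSpace ℝ W]

theorem fderiv_fderiv_apply_comm {f : V → W} {p : V} (hf : ContDiffAt ℝ 2 f p) (u v : V) :
    fderiv ℝ (fun q => fderiv ℝ f q u) p v = fderiv ℝ (fun q => fderiv ℝ f q v) p u := by
  have hdiff : DifferentiableAt ℝ (fderiv ℝ f) p :=
    (hf.fderiv_right (m := 1) (by norm_num)).differentiableAt one_ne_zero
  have hsymm : IsSymmSndFDerivAt ℝ f p := hf.isSymmSndFDerivAt (by simp)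
  simpa [fderiv_clm_apply hdiff (differentiableAt_const _)] using hsymm.eq v u

theorem hasDerivAt_prodMk_const {f : ℝ × V → W} {s : ℝ} {p : V}
    (hf : DifferentiableAt ℝ f (s, p)) :
    HasDerivAt (fun σ => f (σ, p)) (fderiv ℝ f (s, p) (1, 0)) s :=
  hf.hasFDerivAt.comp_hasDerivAt (f := fun σ => (σ, p)) s
    ((hasDerivAt_id s).prodMk (hasDerivAt_const s p))

theorem hasDerivAt_const_prodMk {f : ℝ × V → W} {γ : ℝ → V} {γ' : V} {s t : ℝ}
    (hf : DifferentiableAt ℝ f (s, γ t)) (hγ : HasDerivAt γ γ' t) :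
    HasDerivAt (fun τ => f (s, γ τ)) (fderiv ℝ f (s, γ t) (0, γ')) t :=
  hf.hasFDerivAt.comp_hasDerivAt (f := fun τ => (s, γ τ)) t ((hasDerivAt_const t s).prodMk hγ)

theorem hasDerivAt_fst_snd {f : ℝ → V × W} {f' : V × W} {t : ℝ} (h : HasDerivAt f f' t) :
    HasDerivAt (fun τ => (f τ).1) f'.1 t ∧ HasDerivAt (fun τ => (f τ).2) f'.2 t :=
  ⟨(ContinuousLinearMap.fst ℝ V W).hasFDerivAt.comp_hasDerivAt t h,
    (ContinuousLinearMap.snd ℝ V W).hasFDerivAt.comp_hasDerivAt t h⟩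

theorem hasDerivAt_add_smul (p v : V) : HasDerivAt (fun t : ℝ => p + t • v) v 0 := by
  simpa using ((hasDerivAt_id (0 : ℝ)).smul_const v).const_add p

theorem hasDerivAt_deriv_of_contDiffOn_two {γ : ℝ → V} {U : Set ℝ} {t : ℝ} (hU : IsOpen U)
    (hγ : ContDiffOn ℝ 2 γ U) (ht : t ∈ U) :
    HasDerivAt γ (deriv γ t) t ∧ HasDerivAt (deriv γ) (deriv (deriv γ) t) t := by
  have hγ' : ContDiffOn ℝ 1 (deriv γ) U := hγ.deriv_of_isOpen hU (by norm_num)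
  have htU : U ∈ 𝓝 t := hU.mem_nhds ht
  exact ⟨((hγ.differentiableOn two_ne_zero).differentiableAt htU).hasDerivAt,
    ((hγ'.differentiableOn one_ne_zero).differentiableAt htU).hasDerivAt⟩

theorem eq_zero_of_hasDerivAt_clm {B : ℝ → V →L[ℝ] V} (hB : Continuous B) {u : ℝ → V}
    (hu : ∀ s, HasDerivAt u (B s (u s)) s) {s₀ : ℝ} (h₀ : u s₀ = 0) (s : ℝ) : u s = 0 := by
  obtain ⟨a, b, hs, hs₀⟩ : ∃ a b, s ∈ Ioo a b ∧ s₀ ∈ Ioo a b :=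
    ⟨min s s₀ - 1, max s s₀ + 1, by grind, by grind⟩
  obtain ⟨K, hK⟩ := isCompact_Icc (a := a) (b := b) |>.exists_bound_of_continuousOn hB.continuousOn
  have hlip : ∀ t ∈ Ioo a b, LipschitzOnWith K.toNNReal (B t) univ := fun t ht =>
    ((B t).lipschitz.weaken (NNReal.coe_le_coe.1
      ((hK t (Ioo_subset_Icc_self ht)).trans (Real.le_coe_toNNReal K)))).lipschitzOnWith
  exact ODE_solution_unique_of_mem_Ioo (v := fun t => B t) (s := fun _ => univ) (g := 0)
    hlip hs₀ (fun t _ => ⟨hu t, trivial⟩)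
    (fun t _ => ⟨by simp, trivial⟩) h₀ hs

/-- `y` spans an invariant line of `v' = B v + f y`: with `c' = f`, the difference `v - c y`
solves the homogeneous equation. -/
theorem exists_eq_smul_of_hasDerivAt_add_smul {B : ℝ → V →L[ℝ] V} (hB : Continuous B)
    {f : ℝ → ℝ} (hf : Continuous f) {v y : ℝ → V} (hy : ∀ s, HasDerivAt y (B s (y s)) s)
    (hv : ∀ s, HasDerivAt v (B s (v s) + f s • y s) s) {c₀ : ℝ} (h₀ : v 0 = c₀ • y 0) (s : ℝ) :
    ∃ c : ℝ, v s = c • y s := by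
  let c : ℝ → ℝ := fun σ => c₀ + ∫ τ in (0 : ℝ)..σ, f τ
  have hc (σ : ℝ) : HasDerivAt c (f σ) σ :=
    (hf.integral_hasStrictDerivAt 0 σ).hasDerivAt.const_add _
  have hdiff (σ : ℝ) : HasDerivAt (fun σ => v σ - c σ • y σ) (B σ (v σ - c σ • y σ)) σ := by
    refine ((hv σ).sub ((hc σ).smul (hy σ))).congr_deriv ?_
    rw [map_sub, map_smul]
    abel
  exact ⟨c s, sub_eq_zero.1 (eq_zero_of_hasDerivAt_clm hB hdiff (s₀ := 0) (by simp [c, h₀]) s)⟩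

theorem exists_deriv_deriv_eq_of_contDiffOn [CompleteSpace V] {G : V × V → V} {U : Set (V × V)}
    (hU : IsOpen U) (hG : ContDiffOn ℝ 1 G U) {p : V × V} (hp : p ∈ U) :
    ∃ (γ : ℝ → V) (ε : ℝ), 0 < ε ∧ ContDiffOn ℝ 2 γ (Ioo (-ε) ε) ∧ (γ 0, deriv γ 0) = p ∧
      ∀ t ∈ Ioo (-ε) ε, (γ t, deriv γ t) ∈ U ∧ deriv (deriv γ) t = G (γ t, deriv γ t) := by
  have hfield : ContDiffAt ℝ 1 (fun q : V × V => (q.2, G q)) p :=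
    contDiffAt_snd.prodMk (hG.contDiffAt (hU.mem_nhds hp))
  obtain ⟨α, hα₀, δ, hδ, hα⟩ :=
    hfield.exists_forall_mem_closedBall_exists_eq_forall_mem_Ioo_hasDerivAt₀ 0
  have hαU : ∀ᶠ t in 𝓝 (0 : ℝ), HasDerivAt α ((α t).2, G (α t)) t ∧ α t ∈ U := by
    refine (Filter.eventually_of_mem (Ioo_mem_nhds (by linarith) (by linarith)) hα).and ?_
    exact (hα 0 (by simp [hδ])).continuousAt.eventually_mem (hα₀ ▸ hU.mem_nhds hp)
  obtain ⟨ε, hε, hball⟩ := Metric.eventually_nhds_iff_ball.1 hαU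
  simp only [Real.ball_eq_Ioo, zero_sub, zero_add] at hball
  have hvel : ∀ t ∈ Ioo (-ε) ε, HasDerivAt (fun t => (α t).1) (α t).2 t :=
    fun t ht => (hasDerivAt_fst_snd (hball t ht).1).1
  have hjet : ∀ t ∈ Ioo (-ε) ε, ((α t).1, deriv (fun t => (α t).1) t) = α t :=
    fun t ht => Prod.ext rfl (hvel t ht).deriv
  have hacc : ∀ t ∈ Ioo (-ε) ε, HasDerivAt (deriv fun t => (α t).1) (G (α t)) t := fun t ht =>
    (hasDerivAt_fst_snd (hball t ht).1).2.congr_of_eventuallyEq <|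
      Filter.eventually_of_mem (isOpen_Ioo.mem_nhds ht) fun τ hτ => (hvel τ hτ).deriv
  have hcont : ContinuousOn (fun t => G (α t)) (Ioo (-ε) ε) := hG.continuousOn.comp
    (fun t ht => (hball t ht).1.continuousAt.continuousWithinAt) fun t ht => (hball t ht).2
  have hC1 : ContDiffOn ℝ 1 (deriv fun t => (α t).1) (Ioo (-ε) ε) := by
    rw [← zero_add 1, contDiffOn_succ_iff_deriv_of_isOpen isOpen_Ioo, contDiffOn_zero]
    exact ⟨fun t ht => (hacc t ht).differentiableAt.differentiableWithinAt, by simp,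
      hcont.congr fun t ht => (hacc t ht).deriv⟩
  have hC2 : ContDiffOn ℝ 2 (fun t => (α t).1) (Ioo (-ε) ε) := by
    rw [← one_add_one_eq_two, contDiffOn_succ_iff_deriv_of_isOpen isOpen_Ioo]
    exact ⟨fun t ht => (hvel t ht).differentiableAt.differentiableWithinAt, by simp, hC1⟩
  refine ⟨_, ε, hε, hC2, (hjet 0 (by simp [hε])).trans hα₀, fun t ht => ?_⟩
  rw [hjet t ht, (hacc t ht).deriv]
  exact ⟨(hball t ht).2, rfl⟩

end Calculus

section SmoothLinearSystems

variable {V ι : Type*} [NormedAddCommGroup V] [NormedSpace ℝ V] [Fintype ι] [DecidableEq ι]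
  {k : WithTop ℕ∞} {s : Set V} {A : V → Matrix ι ι ℝ} {b : V → ι → ℝ}

theorem contDiffOn_matrix_det (hA : ∀ i j, ContDiffOn ℝ k (fun p => A p i j) s) :
    ContDiffOn ℝ k (fun p => (A p).det) s := by
  simp only [Matrix.det_apply]
  exact ContDiffOn.sum fun σ _ => (contDiffOn_prod fun i _ => hA _ _).const_smul _

theorem contDiffOn_matrix_inv_mulVec (hA : ∀ i j, ContDiffOn ℝ k (fun p => A p i j) s)
    (hb : ∀ i, ContDiffOn ℝ k (fun p => b p i) s) (hdet : ∀ p ∈ s, (A p).det ≠ 0) :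
    ContDiffOn ℝ k (fun p => (A p)⁻¹ *ᵥ b p) s := by
  have hcramer (i : ι) : ContDiffOn ℝ k (fun p => ((A p).updateCol i (b p)).det) s := by
    refine contDiffOn_matrix_det fun j l => ?_
    simp only [Matrix.updateCol_apply]
    split_ifs
    exacts [hb j, hA j l]
  refine contDiffOn_pi.2 fun i =>
    (((contDiffOn_matrix_det hA).inv hdet).mul (hcramer i)).congr fun p hp => ?_
  rw [← Matrix.cramer_apply, ← Matrix.det_smul_inv_mulVec_eq_cramer _ _ (hdet p hp).isUnit,
    Pi.smul_apply, smul_eq_mul, Pi.inv_apply, inv_mul_cancel_left₀ (hdet p hp)]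

end SmoothLinearSystems

section LiftedFlow

variable {V : Type*} [NormedAddCommGroup V] [NormedSpace ℝ V]

/-- `φ` is the global flow of the vector field `X`, with time as the first argument. -/
structure IsFlow (X : V → V) (φ : ℝ × V → V) : Prop where
  map_zero : ∀ p, φ (0, p) = p
  hasDerivAt : ∀ s p, HasDerivAt (fun s' => φ (s', p)) (X (φ (s, p))) s

/-- The complete lift of the vector field `X` to the tangent bundle `V × V`. -/
def completeLift (X : V → V) (q : V × V) : V × V := (X q.1, fderiv ℝ X q.1 q.2)

/-- The action of `φ` on the tangent bundle by the space derivatives of its time-`s` maps. -/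
def liftedFlow (φ : ℝ × V → V) (q : ℝ × V × V) : V × V :=
  (φ (q.1, q.2.1), fderiv ℝ φ (q.1, q.2.1) (0, q.2.2))

/-- The fibre component of the second prolongation of `X`: the rate of change, under the flow of
`X`, of an acceleration `w` at the jet `p`. -/
def accelField (X : V → V) (p : V × V) (w : V) : V := (fderiv ℝ (completeLift X) p (p.2, w)).2

/-- The acceleration of the image under `φ (s, ·)` of a curve with jet `p` and acceleration `w`. -/
def liftedAccel (φ : ℝ × V → V) (s : ℝ) (p : V × V) (w : V) : V :=
  (fderiv ℝ (liftedFlow φ) (s, p) (0, (p.2, w))).2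

/-- The fibre component of the Lie bracket of the complete lift of `X` with the second-order field
`(y, C)` on the tangent bundle; the base component of this bracket is zero. -/
def liftBracket (X : V → V) (C : V × V → V) (p : V × V) : V :=
  fderiv ℝ C p (completeLift X p) - accelField X p (C p)

variable {X : V → V} {φ : ℝ × V → V}

theorem contDiff_liftedFlow (hφ : ContDiff ℝ 3 φ) : ContDiff ℝ 2 (liftedFlow φ) := by
  have hbase : ContDiff ℝ 2 (fun q : ℝ × V × V => (q.1, q.2.1)) := by fun_prop
  have hfib : ContDiff ℝ 2 (fun q : ℝ × V × V => ((0 : ℝ), q.2.2)) := by fun_prop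
  exact ((hφ.of_le (by norm_num)).comp hbase).prodMk
    (((hφ.fderiv_right (m := 2) (by norm_num)).comp hbase).clm_apply hfib)

theorem accelField_eq (hX : ContDiff ℝ 2 X) (p : V × V) (w : V) :
    accelField X p w = fderiv ℝ (fderiv ℝ X) p.1 p.2 p.2 + fderiv ℝ X p.1 w := by
  have hX₁ : DifferentiableAt ℝ X p.1 := hX.differentiable two_ne_zero _
  have hX₂ : DifferentiableAt ℝ (fderiv ℝ X) p.1 :=
    (hX.fderiv_right (m := 1) (by norm_num)).differentiable one_ne_zero _
  have h := (hX₁.hasFDerivAt.comp p hasFDerivAt_fst).prodMk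
    ((hX₂.hasFDerivAt.comp p hasFDerivAt_fst).clm_apply hasFDerivAt_snd)
  rw [accelField, show fderiv ℝ (completeLift X) p = _ from h.fderiv]
  simp [add_comm]

theorem continuousOn_liftBracket {C : V × V → V} {U : Set (V × V)} (hU : IsOpen U)
    (hX : ContDiff ℝ 2 X) (hC : ContDiffOn ℝ 1 C U) : ContinuousOn (liftBracket X C) U := by
  have hX₁ : ContDiff ℝ 1 (fderiv ℝ X) := hX.fderiv_right (by norm_num)
  have hDX : Continuous fun q : V × V => fderiv ℝ X q.1 := hX₁.continuous.comp continuous_fst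
  have hDDX : Continuous fun q : V × V => fderiv ℝ (fderiv ℝ X) q.1 :=
    (hX₁.continuous_fderiv one_ne_zero).comp continuous_fst
  have hlift : Continuous (completeLift X) :=
    (hX.continuous.comp continuous_fst).prodMk (hDX.clm_apply continuous_snd)
  refine ((hC.continuousOn_fderiv_of_isOpen hU le_rfl).clm_apply hlift.continuousOn).sub ?_
  simp only [accelField_eq hX]
  exact ((hDDX.clm_apply continuous_snd).clm_apply continuous_snd).continuousOn.add
    (hDX.continuousOn.clm_apply hC.continuousOn)

theorem fderiv_liftedFlow_fst (hφ : ContDiff ℝ 3 φ) (s : ℝ) (p a : V × V) :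
    (fderiv ℝ (liftedFlow φ) (s, p) (0, a)).1 = fderiv ℝ φ (s, p.1) (0, a.1) := by
  have hlift := (hasDerivAt_fst_snd (hasDerivAt_const_prodMk (s := s)
    ((contDiff_liftedFlow hφ).differentiable two_ne_zero _) (hasDerivAt_add_smul p a))).1
  have hbase := hasDerivAt_const_prodMk (s := s) (hφ.differentiable three_ne_zero _)
    (hasDerivAt_fst_snd (hasDerivAt_add_smul p a)).1
  simpa using hlift.unique hbase

theorem hasDerivAt_deriv_comp (hφ : ContDiff ℝ 3 φ) {γ : ℝ → V} {U : Set ℝ} (hU : IsOpen U)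
    (hγ : ContDiffOn ℝ 2 γ U) {t : ℝ} (ht : t ∈ U) (s : ℝ) :
    deriv (fun τ => φ (s, γ τ)) t = (liftedFlow φ (s, γ t, deriv γ t)).2 ∧
    HasDerivAt (deriv fun τ => φ (s, γ τ))
      (liftedAccel φ s (γ t, deriv γ t) (deriv (deriv γ) t)) t := by
  have hvel : ∀ τ ∈ U,
      deriv (fun τ => φ (s, γ τ)) τ = (liftedFlow φ (s, γ τ, deriv γ τ)).2 := fun τ hτ =>
    (hasDerivAt_const_prodMk (hφ.differentiable three_ne_zero _)
      (hasDerivAt_deriv_of_contDiffOn_two hU hγ hτ).1).deriv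
  obtain ⟨h₁, h₂⟩ := hasDerivAt_deriv_of_contDiffOn_two hU hγ ht
  have hjet := hasDerivAt_const_prodMk (s := s) (γ := fun τ => (γ τ, deriv γ τ))
    ((contDiff_liftedFlow hφ).differentiable two_ne_zero _) (h₁.prodMk h₂)
  exact ⟨hvel t ht, (hasDerivAt_fst_snd hjet).2.congr_of_eventuallyEq
    (Filter.eventually_of_mem (hU.mem_nhds ht) hvel)⟩

namespace IsFlow

theorem fderiv_apply_time (h : IsFlow X φ) (hφ : Differentiable ℝ φ) (q : ℝ × V) :
    fderiv ℝ φ q (1, 0) = X (φ q) :=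
  (hasDerivAt_prodMk_const (hφ q)).unique (h.hasDerivAt q.1 q.2)

theorem contDiff_field {k : WithTop ℕ∞} (h : IsFlow X φ) (hφ : ContDiff ℝ (k + 1) φ) :
    ContDiff ℝ k X := by
  have hX : X = fun p => fderiv ℝ φ (0, p) (1, 0) := funext fun p => by
    rw [h.fderiv_apply_time (hφ.differentiable (by simp)), h.map_zero]
  rw [hX]
  exact ((hφ.fderiv_right le_rfl).comp (contDiff_prodMk_right 0)).clm_apply contDiff_const

theorem hasDerivAt_fderiv_space (h : IsFlow X φ) (hφ : ContDiff ℝ 2 φ) (s : ℝ) (p v : V) :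
    HasDerivAt (fun s' => fderiv ℝ φ (s', p) (0, v))
      (fderiv ℝ X (φ (s, p)) (fderiv ℝ φ (s, p) (0, v))) s := by
  have hX : Differentiable ℝ X := (h.contDiff_field (k := 1) hφ).differentiable one_ne_zero
  have hφ₁ : Differentiable ℝ φ := hφ.differentiable two_ne_zero
  have hφ₂ : DifferentiableAt ℝ (fun q => fderiv ℝ φ q (0, v)) (s, p) :=
    ((hφ.fderiv_right (m := 1) (by norm_num)).clm_apply contDiff_const).differentiable
      one_ne_zero _
  refine (hasDerivAt_prodMk_const hφ₂).congr_deriv ?_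
  rw [fderiv_fderiv_apply_comm hφ.contDiffAt, funext (h.fderiv_apply_time hφ₁)]
  exact DFunLike.congr_fun ((hX _).hasFDerivAt.comp (s, p) (hφ₁ (s, p)).hasFDerivAt).fderiv (0, v)

theorem fderiv_space_zero (h : IsFlow X φ) (hφ : Differentiable ℝ φ) (p v : V) :
    fderiv ℝ φ (0, p) (0, v) = v := by
  have := hasDerivAt_const_prodMk (s := 0) (hφ _) (hasDerivAt_add_smul p v)
  simp only [h.map_zero, zero_smul, add_zero] at this
  exact this.unique (hasDerivAt_add_smul p v)

theorem lift (h : IsFlow X φ) (hφ : ContDiff ℝ 2 φ) :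
    IsFlow (completeLift X) (liftedFlow φ) where
  map_zero p := Prod.ext (h.map_zero p.1)
    (h.fderiv_space_zero (hφ.differentiable two_ne_zero) p.1 p.2)
  hasDerivAt s p := (h.hasDerivAt s p.1).prodMk (h.hasDerivAt_fderiv_space hφ s p.1 p.2)

theorem continuous_fderiv_comp (h : IsFlow X φ) (hφ : ContDiff ℝ 2 φ) (p : V) :
    Continuous fun s => fderiv ℝ X (φ (s, p)) :=
  ((h.contDiff_field (k := 1) hφ).continuous_fderiv one_ne_zero).comp
    (hφ.continuous.comp (by fun_prop))

theorem liftedFlow_snd_ne_zero (h : IsFlow X φ) (hφ : ContDiff ℝ 2 φ) {p : V × V}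
    (hp : p.2 ≠ 0) (s : ℝ) : (liftedFlow φ (s, p)).2 ≠ 0 := by
  intro hs
  have h₀ := eq_zero_of_hasDerivAt_clm (h.continuous_fderiv_comp hφ p.1)
    (fun σ => h.hasDerivAt_fderiv_space hφ σ p.1 p.2) hs 0
  exact hp ((h.fderiv_space_zero (hφ.differentiable two_ne_zero) p.1 p.2).symm.trans h₀)

theorem liftedAccel_zero (h : IsFlow X φ) (hφ : ContDiff ℝ 3 φ) (p : V × V) (w : V) :
    liftedAccel φ 0 p w = w := by
  rw [liftedAccel, (h.lift (hφ.of_le (by norm_num))).fderiv_space_zero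
    ((contDiff_liftedFlow hφ).differentiable two_ne_zero) p]

theorem hasDerivAt_liftedAccel (h : IsFlow X φ) (hφ : ContDiff ℝ 3 φ) (s : ℝ) (p : V × V) (w : V) :
    HasDerivAt (fun s' => liftedAccel φ s' p w)
      (accelField X (liftedFlow φ (s, p)) (liftedAccel φ s p w)) s := by
  have hvar := (h.lift (hφ.of_le (by norm_num))).hasDerivAt_fderiv_space
    (contDiff_liftedFlow hφ) s p (p.2, w)
  have hjet : fderiv ℝ (liftedFlow φ) (s, p) (0, (p.2, w)) =
      ((liftedFlow φ (s, p)).2, liftedAccel φ s p w) :=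
    Prod.ext (fderiv_liftedFlow_fst hφ s p (p.2, w)) rfl
  rw [hjet] at hvar
  exact (hasDerivAt_fst_snd hvar).2

theorem hasDerivAt_liftedAccel_sub (h : IsFlow X φ) (hφ : ContDiff ℝ 3 φ) {C : V × V → V}
    (s : ℝ) (p : V × V) (w : V) (hC : DifferentiableAt ℝ C (liftedFlow φ (s, p))) :
    HasDerivAt (fun s' => liftedAccel φ s' p w - C (liftedFlow φ (s', p)))
      (fderiv ℝ X (φ (s, p.1)) (liftedAccel φ s p w - C (liftedFlow φ (s, p)))
        - liftBracket X C (liftedFlow φ (s, p))) s := by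
  have hX : ContDiff ℝ 2 X := h.contDiff_field (hφ.of_le (by norm_num))
  have hCflow := hC.hasFDerivAt.comp_hasDerivAt s ((h.lift (hφ.of_le (by norm_num))).hasDerivAt s p)
  refine ((h.hasDerivAt_liftedAccel hφ s p w).sub hCflow).congr_deriv ?_
  rw [liftBracket, accelField_eq hX, accelField_eq hX, map_sub]
  simp only [liftedFlow]
  abel

end IsFlow

end LiftedFlow

section SlitTangentBundle

variable {n : ℕ} {f : E n × E n → ℝ} {p : E n × E n}

/-- The slit tangent bundle of `ℝⁿ`: pairs of a base point and a nonzero tangent vector. -/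
def slit (n : ℕ) : Set (E n × E n) := {p | p.2 ≠ 0}

/-- Smoothness off the zero section. -/
abbrev SmoothOnSlit (f : E n × E n → ℝ) : Prop := ContDiffOn ℝ ∞ f (slit n)

theorem isOpen_slit : IsOpen (slit n) := isOpen_ne_fun continuous_snd continuous_const

theorem slit_mem_nhds (hp : p ∈ slit n) : slit n ∈ 𝓝 p := isOpen_slit.mem_nhds hp

namespace SmoothOnSlit

theorem contDiffAt_two (hf : SmoothOnSlit f) (hp : p ∈ slit n) : ContDiffAt ℝ 2 f p :=
  (hf.contDiffAt (slit_mem_nhds hp)).of_le ENat.LEInfty.out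

theorem differentiableAt (hf : SmoothOnSlit f) (hp : p ∈ slit n) : DifferentiableAt ℝ f p :=
  (hf.contDiffAt_two hp).differentiableAt two_ne_zero

theorem fderiv_apply (hf : SmoothOnSlit f) {v : E n × E n → E n × E n} (hv : ContDiff ℝ ∞ v) :
    SmoothOnSlit fun q => fderiv ℝ f q (v q) :=
  (hf.fderiv_of_isOpen isOpen_slit (by simp)).clm_apply hv.contDiffOn

theorem pdx (hf : SmoothOnSlit f) (i : Fin n) : SmoothOnSlit (pdx i f) :=
  hf.fderiv_apply contDiff_const

theorem pdy (hf : SmoothOnSlit f) (i : Fin n) : SmoothOnSlit (pdy i f) :=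
  hf.fderiv_apply contDiff_const

end SmoothOnSlit

theorem pdx_pdy_comm (hf : SmoothOnSlit f) (hp : p ∈ slit n) (i k : Fin n) :
    pdx k (pdy i f) p = pdy i (pdx k f) p :=
  fderiv_fderiv_apply_comm (hf.contDiffAt_two hp) _ _

theorem pdy_pdy_comm (hf : SmoothOnSlit f) (hp : p ∈ slit n) (i k : Fin n) :
    pdy k (pdy i f) p = pdy i (pdy k f) p :=
  fderiv_fderiv_apply_comm (hf.contDiffAt_two hp) _ _

theorem clm_apply_eq_sum {W : Type*} [NormedAddCommGroup W] [NormedSpace ℝ W] (L : E n →L[ℝ] W)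
    (a : E n) : L a = ∑ s, a s • L (Pi.single s 1) := by
  conv_lhs => rw [pi_eq_sum_univ' a]
  simp only [map_sum, map_smul]

theorem fderiv_apply_horizontal (f : E n × E n → ℝ) (p : E n × E n) (a : E n) :
    fderiv ℝ f p (a, 0) = ∑ s, pdx s f p * a s := by
  simpa [mul_comm, pdx] using clm_apply_eq_sum (fderiv ℝ f p ∘L .inl ℝ (E n) (E n)) a

theorem fderiv_apply_vertical (f : E n × E n → ℝ) (p : E n × E n) (b : E n) :
    fderiv ℝ f p (0, b) = ∑ s, pdy s f p * b s := by
  simpa [mul_comm, pdy] using clm_apply_eq_sum (fderiv ℝ f p ∘L .inr ℝ (E n) (E n)) b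

theorem fderiv_apply_eq_sum (f : E n × E n → ℝ) (p : E n × E n) (a b : E n) :
    fderiv ℝ f p (a, b) = ∑ s, pdx s f p * a s + ∑ s, pdy s f p * b s := by
  rw [← fderiv_apply_horizontal, ← fderiv_apply_vertical, ← map_add, Prod.mk_add_mk, add_zero,
    zero_add]

theorem hasDerivAt_comp_jet {γ : ℝ → E n} {U : Set ℝ} {t : ℝ} (hU : IsOpen U)
    (hγ : ContDiffOn ℝ 2 γ U) (ht : t ∈ U) (hf : DifferentiableAt ℝ f (γ t, deriv γ t)) :
    HasDerivAt (fun τ => f (γ τ, deriv γ τ))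
      (fderiv ℝ f (γ t, deriv γ t) (deriv γ t, deriv (deriv γ) t)) t := by
  obtain ⟨hvel, hacc⟩ := hasDerivAt_deriv_of_contDiffOn_two hU hγ ht
  exact hf.hasFDerivAt.comp_hasDerivAt (f := fun τ => (γ τ, deriv γ τ)) t (hvel.prodMk hacc)

end SlitTangentBundle

section EulerLagrange

variable {n : ℕ}

/-- The fibre gradient `F_y`. -/
def fiberGradient (F : E n × E n → ℝ) (p : E n × E n) : E n := fun k => pdy k F p

/-- The fibre Hessian `F_yy`. -/
def fiberHessian (F : E n × E n → ℝ) (p : E n × E n) : Matrix (Fin n) (Fin n) ℝ :=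
  Matrix.of fun i k => pdy k (pdy i F) p

/-- The Euler–Lagrange covector `F_x - d/dt F_y` of a curve with jet `p` and acceleration `w`. -/
def eulerLagrangeForm (F : E n × E n → ℝ) (p : E n × E n) (w : E n) : E n :=
  fun i => pdx i F p - fderiv ℝ (pdy i F) p (p.2, w)

/-- The fundamental tensor `½ (F²)_yy`, expanded as `F F_yy + F_y ⊗ F_y`. -/
def fundamentalTensor (F : E n × E n → ℝ) (p : E n × E n) : Matrix (Fin n) (Fin n) ℝ :=
  F p • fiberHessian F p + Matrix.vecMulVec (fiberGradient F p) (fiberGradient F p)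

variable (F : E n × E n → ℝ) (p : E n × E n)

theorem fiberGradient_dotProduct (v : E n) : fiberGradient F p ⬝ᵥ v = fderiv ℝ F p (0, v) :=
  (fderiv_apply_vertical F p v).symm

theorem fiberHessian_mulVec (v : E n) :
    fiberHessian F p *ᵥ v = fun i => fderiv ℝ (pdy i F) p (0, v) :=
  funext fun i => (fderiv_apply_vertical (pdy i F) p v).symm

theorem eulerLagrangeForm_add (w v : E n) :
    eulerLagrangeForm F p (w + v) = eulerLagrangeForm F p w - fiberHessian F p *ᵥ v := by
  ext i
  have hsplit : ((p.2, w + v) : E n × E n) = (p.2, w) + (0, v) := by simp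
  simp only [eulerLagrangeForm, fiberHessian_mulVec, Pi.sub_apply, hsplit, map_add]
  ring

theorem eulerLagrangeForm_apply (w : E n) (i : Fin n) :
    eulerLagrangeForm F p w i =
      pdx i F p - ∑ k, pdx k (pdy i F) p * p.2 k - ∑ k, pdy k (pdy i F) p * w k := by
  rw [eulerLagrangeForm, fderiv_apply_eq_sum, sub_sub]

theorem fundamentalTensor_mulVec (v : E n) :
    fundamentalTensor F p *ᵥ v =
      F p • (fiberHessian F p *ᵥ v) + fderiv ℝ F p (0, v) • fiberGradient F p := by
  rw [fundamentalTensor, Matrix.add_mulVec, Matrix.smul_mulVec, Matrix.vecMulVec_mulVec,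
    fiberGradient_dotProduct, op_smul_eq_smul]

theorem isPregeodesic_iff {c : ℝ → E n} {t₁ t₂ : ℝ} :
    IsPregeodesic F c t₁ t₂ ↔ t₁ < t₂ ∧ ContDiffOn ℝ 2 c (Ioo t₁ t₂) ∧
      (∀ t ∈ Ioo t₁ t₂, deriv c t ≠ 0) ∧
      ∀ t ∈ Ioo t₁ t₂, eulerLagrangeForm F (c t, deriv c t) (deriv (deriv c) t) = 0 := by
  refine and_congr_right fun _ => and_congr_right fun hc => and_congr_right fun _ => ?_
  rw [forall_comm]
  refine forall_congr' fun t => ?_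
  rw [forall_comm]
  refine forall_congr' fun ht => ?_
  have hacc (k : Fin n) : deriv (fun s => deriv c s k) t = deriv (deriv c) t k :=
    (hasDerivAt_pi.1 (hasDerivAt_deriv_of_contDiffOn_two isOpen_Ioo hc ht).2 k).deriv
  simp only [hacc, funext_iff, eulerLagrangeForm_apply, Pi.zero_apply, sub_sub, sub_eq_zero]

end EulerLagrange

namespace IsFinsler

variable {n : ℕ} {F : E n × E n → ℝ} {p : E n × E n}

theorem smoothOnSlit (hF : IsFinsler F) : SmoothOnSlit F := hF.smooth

theorem ne_zero (hF : IsFinsler F) (hp : p ∈ slit n) : F p ≠ 0 := (hF.pos p.1 p.2 hp).ne'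

theorem fderiv_fiber_self (hF : IsFinsler F) (hp : p ∈ slit n) : fderiv ℝ F p (0, p.2) = F p := by
  have hscale : HasDerivAt (fun t : ℝ => (p.1, p.2 + t • p.2)) ((0, p.2) : E n × E n) 0 :=
    (hasDerivAt_const 0 p.1).prodMk (hasDerivAt_add_smul p.2 p.2)
  have hchain := (hF.smoothOnSlit.differentiableAt hp).hasFDerivAt.comp_hasDerivAt_of_eq 0 hscale
    (by simp)
  refine hchain.unique (HasDerivAt.congr_of_eventuallyEq (f := fun t => F p + t • F p)
    (hasDerivAt_add_smul _ _) ?_)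
  filter_upwards [lt_mem_nhds neg_one_lt_zero] with t ht
  have hhom := hF.homog p.1 p.2 (1 + t) (by linarith)
  rw [add_smul, one_smul] at hhom
  rw [Function.comp_apply, hhom, add_mul, one_mul, smul_eq_mul]

/-- The derivative of Euler's identity `F_y · y = F`, with the fibre argument frozen. -/
theorem fderiv_fderiv_fiber_self (hF : IsFinsler F) (hp : p ∈ slit n) (a b : E n) :
    fderiv ℝ (fun q => fderiv ℝ F q (0, p.2)) p (a, b) = fderiv ℝ F p (a, 0) := by
  have hdF : DifferentiableAt ℝ (fderiv ℝ F) p :=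
    ((hF.smoothOnSlit.contDiffAt_two hp).fderiv_right (m := 1) (by norm_num)).differentiableAt
      one_ne_zero
  have hid : (fun q => fderiv ℝ F q (0, q.2)) =ᶠ[𝓝 p] F :=
    Filter.eventually_of_mem (slit_mem_nhds hp) fun q hq => hF.fderiv_fiber_self hq
  have hy := (ContinuousLinearMap.inr ℝ (E n) (E n) ∘L .snd ℝ (E n) (E n)).hasFDerivAt (x := p)
  have hprod := DFunLike.congr_fun
    ((hdF.hasFDerivAt.clm_apply hy).fderiv.symm.trans hid.fderiv_eq) (a, b)
  have hsplit : ((a, b) : E n × E n) = (a, 0) + (0, b) := by simp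
  rw [fderiv_clm_apply hdF (differentiableAt_const _)]
  simp only [hsplit, ContinuousLinearMap.comp_apply, ContinuousLinearMap.coe_snd',
    ContinuousLinearMap.inr_apply, add_apply, zero_add,
    ContinuousLinearMap.flip_apply, map_add, fderiv_fun_const, Pi.zero_apply,
    ContinuousLinearMap.comp_zero, map_zero] at hprod ⊢
  linarith

theorem fiberHessian_mulVec_self (hF : IsFinsler F) (hp : p ∈ slit n) :
    fiberHessian F p *ᵥ p.2 = 0 := by
  ext i
  rw [fiberHessian_mulVec, Pi.zero_apply, ← map_zero (fderiv ℝ F p)]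
  exact (fderiv_fderiv_apply_comm (hF.smoothOnSlit.contDiffAt_two hp) _ _).trans
    (hF.fderiv_fderiv_fiber_self hp _ _)

theorem eulerLagrangeForm_dotProduct_self (hF : IsFinsler F) (hp : p ∈ slit n) (w : E n) :
    eulerLagrangeForm F p w ⬝ᵥ p.2 = 0 := by
  have hFy : (fun q => fderiv ℝ F q (0, p.2)) = fun q => ∑ i, pdy i F q * p.2 i :=
    funext fun q => fderiv_apply_vertical F q p.2
  have hsum := hF.fderiv_fderiv_fiber_self hp p.2 w
  rw [hFy, fderiv_fun_sum fun i _ =>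
    ((hF.smoothOnSlit.pdy i).differentiableAt hp).mul_const _] at hsum
  simp only [fderiv_mul_const ((hF.smoothOnSlit.pdy _).differentiableAt hp),
    sum_apply, smul_apply, smul_eq_mul, fderiv_apply_horizontal] at hsum
  simp only [dotProduct, eulerLagrangeForm, sub_mul, Finset.sum_sub_distrib, ← hsum]
  simp only [mul_comm, sub_self]

theorem fundamentalTensor_eq (hF : IsFinsler F) (hp : p ∈ slit n) :
    fundamentalTensor F p =
      Matrix.of fun i j => (1 / 2) * pdy i (pdy j fun q => F q ^ 2) p := by
  have hF₁ {q} (hq : q ∈ slit n) := (hF.smoothOnSlit.differentiableAt hq).hasFDerivAt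
  have hsq (j : Fin n) : pdy j (fun q => F q ^ 2) =ᶠ[𝓝 p] fun q => 2 * (F q * pdy j F q) := by
    filter_upwards [slit_mem_nhds hp] with q hq
    simp [pdy, ((hF₁ hq).pow 2).fderiv, mul_assoc]
  ext i j
  have hprod := ((hF₁ hp).mul ((hF.smoothOnSlit.pdy j).differentiableAt hp).hasFDerivAt).const_mul 2
  have hij : pdy i (pdy j fun q => F q ^ 2) p =
      2 * (F p * pdy i (pdy j F) p + pdy j F p * pdy i F p) := by
    rw [pdy, (hsq j).fderiv_eq]
    exact (DFunLike.congr_fun hprod.fderiv _).trans (by simp [pdy, mul_add])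
  rw [Matrix.of_apply, hij, pdy_pdy_comm hF.smoothOnSlit hp]
  simp only [fundamentalTensor, fiberHessian, fiberGradient, Matrix.add_apply, Matrix.smul_apply,
    Matrix.of_apply, Matrix.vecMulVec_apply, smul_eq_mul]
  ring

theorem det_fundamentalTensor_ne_zero (hF : IsFinsler F) (hp : p ∈ slit n) :
    (fundamentalTensor F p).det ≠ 0 := by
  rw [hF.fundamentalTensor_eq hp]
  exact (hF.posDef p.1 p.2 hp).det_pos.ne'

theorem eq_smul_of_fiberHessian_mulVec_eq_zero (hF : IsFinsler F) (hp : p ∈ slit n) {v : E n}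
    (hv : fiberHessian F p *ᵥ v = 0) : v = (fderiv ℝ F p (0, v) / F p) • p.2 := by
  refine sub_eq_zero.1 (Matrix.eq_zero_of_mulVec_eq_zero (hF.det_fundamentalTensor_ne_zero hp) ?_)
  rw [Matrix.mulVec_sub, Matrix.mulVec_smul, fundamentalTensor_mulVec, fundamentalTensor_mulVec, hv,
    hF.fiberHessian_mulVec_self hp, hF.fderiv_fiber_self hp, smul_zero, zero_add, zero_add,
    smul_smul, div_mul_cancel₀ _ (hF.ne_zero hp), sub_self]

end IsFinsler

/-- The geodesic spray coefficients: the acceleration of a constant speed geodesic, obtained from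
the Euler–Lagrange equations of `½ F²`. -/
def spray {n : ℕ} (F : E n × E n → ℝ) (p : E n × E n) : E n :=
  (fundamentalTensor F p)⁻¹ *ᵥ
    (F p • eulerLagrangeForm F p 0 - fderiv ℝ F p (p.2, 0) • fiberGradient F p)

namespace IsFinsler

variable {n : ℕ} {F : E n × E n → ℝ} {p : E n × E n}

theorem contDiffOn_spray (hF : IsFinsler F) : ContDiffOn ℝ ∞ (spray F) (slit n) := by
  have hF₀ := hF.smoothOnSlit
  have hhor : ContDiff ℝ ∞ fun q : E n × E n => (q.2, (0 : E n)) := by fun_prop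
  refine contDiffOn_matrix_inv_mulVec (fun i j => ?_) (fun i => ?_)
    fun p hp => hF.det_fundamentalTensor_ne_zero hp
  · exact (hF₀.mul ((hF₀.pdy i).pdy j)).add ((hF₀.pdy i).mul (hF₀.pdy j))
  · exact (hF₀.mul ((hF₀.pdx i).sub ((hF₀.pdy i).fderiv_apply hhor))).sub
      ((hF₀.fderiv_apply hhor).mul (hF₀.pdy i))

theorem smul_eulerLagrangeForm_spray (hF : IsFinsler F) (hp : p ∈ slit n) :
    F p • eulerLagrangeForm F p (spray F p) =
      fderiv ℝ F p (p.2, spray F p) • fiberGradient F p := by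
  have hspray : fundamentalTensor F p *ᵥ spray F p =
      F p • eulerLagrangeForm F p 0 - fderiv ℝ F p (p.2, 0) • fiberGradient F p := by
    rw [spray, Matrix.mulVec_mulVec,
      Matrix.mul_nonsing_inv _ (hF.det_fundamentalTensor_ne_zero hp).isUnit, Matrix.one_mulVec]
  have hsplit : ((p.2, spray F p) : E n × E n) = (p.2, 0) + (0, spray F p) := by simp
  have hEL := eulerLagrangeForm_add F p 0 (spray F p)
  rw [zero_add] at hEL
  rw [fundamentalTensor_mulVec, eq_sub_iff_add_eq] at hspray
  rw [hEL, smul_sub, ← hspray, hsplit, map_add, add_smul]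
  abel

theorem fderiv_spray_eq_zero (hF : IsFinsler F) (hp : p ∈ slit n) :
    fderiv ℝ F p (p.2, spray F p) = 0 := by
  have h := congrArg (· ⬝ᵥ p.2) (hF.smul_eulerLagrangeForm_spray hp)
  simp only [smul_dotProduct, hF.eulerLagrangeForm_dotProduct_self hp, fiberGradient_dotProduct,
    hF.fderiv_fiber_self hp, smul_eq_mul, mul_zero] at h
  exact (mul_eq_zero.1 h.symm).resolve_right (hF.ne_zero hp)

theorem eulerLagrangeForm_spray (hF : IsFinsler F) (hp : p ∈ slit n) :
    eulerLagrangeForm F p (spray F p) = 0 := by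
  have h := hF.smul_eulerLagrangeForm_spray hp
  rw [hF.fderiv_spray_eq_zero hp, zero_smul] at h
  exact (smul_eq_zero.1 h).resolve_left (hF.ne_zero hp)

theorem exists_isGeodesic (hF : IsFinsler F) (hp : p ∈ slit n) :
    ∃ (γ : ℝ → E n) (ε : ℝ), 0 < ε ∧ IsGeodesic F γ (-ε) ε ∧ (γ 0, deriv γ 0) = p ∧
      deriv (deriv γ) 0 = spray F p := by
  obtain ⟨γ, ε, hε, hγ, hγ₀, hjet⟩ :=
    exists_deriv_deriv_eq_of_contDiffOn isOpen_slit (hF.contDiffOn_spray.of_le (by simp)) hp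
  have hchain {f : E n × E n → ℝ} (hf : SmoothOnSlit f) {t : ℝ} (ht : t ∈ Ioo (-ε) ε) :=
    hasDerivAt_comp_jet isOpen_Ioo hγ ht (hf.differentiableAt (hjet t ht).1)
  have h₀ : (0 : ℝ) ∈ Ioo (-ε) ε := by simp [hε]
  refine ⟨γ, ε, hε, ?_, hγ₀, (hjet 0 h₀).2.trans (by rw [hγ₀])⟩
  have hspeed : ∀ t ∈ Ioo (-ε) ε, HasDerivAt (fun τ => F (γ τ, deriv γ τ)) 0 t := fun t ht =>
    (hchain hF.smoothOnSlit ht).congr_deriv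
      ((hjet t ht).2 ▸ hF.fderiv_spray_eq_zero (hjet t ht).1)
  refine ⟨by linarith, hγ, fun t ht => (hjet t ht).1, ⟨F p, hF.pos _ _ hp, fun t ht => ?_⟩,
    fun i t ht => ?_⟩
  · rw [← hγ₀]
    exact isOpen_Ioo.is_const_of_deriv_eq_zero isPreconnected_Ioo
      (fun τ hτ => (hspeed τ hτ).differentiableAt.differentiableWithinAt)
      (fun τ hτ => (hspeed τ hτ).deriv) ht h₀
  · rw [(hchain (hF.smoothOnSlit.pdy i) ht).deriv, (hjet t ht).2]
    exact (sub_eq_zero.1 (congrFun (hF.eulerLagrangeForm_spray (hjet t ht).1) i)).symm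

end IsFinsler

section GeodesicsUnderFlow

variable {n : ℕ} {F : E n × E n → ℝ} {γ : ℝ → E n} {t₁ t₂ : ℝ}

theorem eulerLagrangeForm_of_isGeodesic (hF : IsFinsler F) (hγ : IsGeodesic F γ t₁ t₂) {t : ℝ}
    (ht : t ∈ Ioo t₁ t₂) : eulerLagrangeForm F (γ t, deriv γ t) (deriv (deriv γ) t) = 0 := by
  ext i
  have hchain := hasDerivAt_comp_jet isOpen_Ioo hγ.smooth ht
    ((hF.smoothOnSlit.pdy i).differentiableAt (hγ.vel t ht))
  rw [eulerLagrangeForm, ← hchain.deriv, hγ.eulerLagrange i t ht, Pi.zero_apply, sub_self]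

theorem isPregeodesic_flow_iff {X : E n → E n} {φ : ℝ × E n → E n} (h : IsFlow X φ)
    (hφ : ContDiff ℝ 3 φ) (hγ : IsGeodesic F γ t₁ t₂) (s : ℝ) :
    IsPregeodesic F (fun t => φ (s, γ t)) t₁ t₂ ↔ ∀ t ∈ Ioo t₁ t₂,
      eulerLagrangeForm F (liftedFlow φ (s, γ t, deriv γ t))
        (liftedAccel φ s (γ t, deriv γ t) (deriv (deriv γ) t)) = 0 := by
  have hvel {t} (ht : t ∈ Ioo t₁ t₂) := (hasDerivAt_deriv_comp hφ isOpen_Ioo hγ.smooth ht s).1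
  have hacc {t} (ht : t ∈ Ioo t₁ t₂) :=
    (hasDerivAt_deriv_comp hφ isOpen_Ioo hγ.smooth ht s).2.deriv
  have hC2 : ContDiffOn ℝ 2 (fun t => φ (s, γ t)) (Ioo t₁ t₂) :=
    (hφ.of_le (by norm_num)).comp_contDiffOn (contDiffOn_const.prodMk hγ.smooth)
  have hne : ∀ t ∈ Ioo t₁ t₂, deriv (fun t => φ (s, γ t)) t ≠ 0 := fun t ht =>
    hvel ht ▸ h.liftedFlow_snd_ne_zero (hφ.of_le (by norm_num)) (hγ.vel t ht) s
  rw [isPregeodesic_iff]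
  simp only [hγ.lt, hC2, true_and]
  refine (and_iff_right hne).trans (forall₂_congr fun t ht => ?_)
  rw [hacc ht, hvel ht]
  rfl

end GeodesicsUnderFlow

/-- The left-hand side of the second-order Killing-type system for `X` at `p`, with `w` in place of
the value of the functions `C`. -/
def killingDefect {n : ℕ} (F : E n × E n → ℝ) (X : E n → E n) (p : E n × E n) (w : E n) : E n :=
  fun i =>
    (∑ s, (pdx s (pdx i F) p
        - (∑ k, pdx s (pdx k (pdy i F)) p * p.2 k)
        - (∑ k, pdx s (pdy k (pdy i F)) p * w k)) * X p.1 s)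
    + (∑ s, ∑ r,
        ((pdy s (pdx i F) p - pdy i (pdx s F) p) * p.2 r
          - pdy s (pdy i F) p * w r
          - ((∑ k, pdy s (pdx k (pdy i F)) p * p.2 k)
              + (∑ k, pdy s (pdy k (pdy i F)) p * w k)) * p.2 r) *
        fderiv ℝ X p.1 (Pi.single r 1) s)
    - (∑ s, ∑ m, ∑ r,
        pdy s (pdy i F) p * p.2 m * p.2 r *
          fderiv ℝ (fun x' => fderiv ℝ X x' (Pi.single r 1) s) p.1 (Pi.single m 1))

section KillingSystem

variable {n : ℕ} {F : E n × E n → ℝ} {X : E n → E n} {p : E n × E n}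

theorem clm_apply_apply_eq_sum (L : E n →L[ℝ] E n) (a : E n) (s : Fin n) :
    L a s = ∑ r, a r * L (Pi.single r 1) s := by
  simp [clm_apply_eq_sum L a]

theorem accelField_apply (hX : ContDiff ℝ 2 X) (w : E n) (s : Fin n) :
    accelField X p w s = (∑ m, ∑ r, p.2 m * p.2 r *
        fderiv ℝ (fun x' => fderiv ℝ X x' (Pi.single r 1) s) p.1 (Pi.single m 1)) +
      ∑ r, w r * fderiv ℝ X p.1 (Pi.single r 1) s := by
  have hX₂ : DifferentiableAt ℝ (fderiv ℝ X) p.1 :=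
    (hX.fderiv_right (m := 1) (by norm_num)).differentiable one_ne_zero _
  have hpartial (r m : Fin n) :
      fderiv ℝ (fun x' => fderiv ℝ X x' (Pi.single r 1) s) p.1 (Pi.single m 1) =
        fderiv ℝ (fderiv ℝ X) p.1 (Pi.single m 1) (Pi.single r 1) s := by
    rw [fderiv_apply (hX₂.clm_apply (differentiableAt_const _)),
      ContinuousLinearMap.comp_apply, fderiv_clm_apply hX₂ (differentiableAt_const _)]
    simp
  rw [accelField_eq hX, Pi.add_apply, clm_apply_apply_eq_sum (fderiv ℝ X p.1),
    clm_apply_eq_sum (fderiv ℝ (fderiv ℝ X) p.1)]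
  simp only [hpartial, sum_apply, smul_apply, Finset.sum_apply, Pi.smul_apply, smul_eq_mul,
    clm_apply_apply_eq_sum (fderiv ℝ (fderiv ℝ X) p.1 _) p.2, Finset.mul_sum, mul_assoc]

theorem fderiv_eulerLagrangeForm (hF : IsFinsler F) (hp : p ∈ slit n) (w : E n) (i : Fin n)
    (u : E n × E n) :
    fderiv ℝ (fun q => eulerLagrangeForm F q w i) p u =
      fderiv ℝ (pdx i F) p u
        - ∑ k, (fderiv ℝ (pdx k (pdy i F)) p u * p.2 k + pdx k (pdy i F) p * u.2 k)
        - ∑ k, fderiv ℝ (pdy k (pdy i F)) p u * w k := by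
  have hd {f : E n × E n → ℝ} (hf : SmoothOnSlit f) := (hf.differentiableAt hp).hasFDerivAt
  have hF₀ := hF.smoothOnSlit
  have hy (k : Fin n) : HasFDerivAt (fun q : E n × E n => q.2 k)
      (ContinuousLinearMap.proj (R := ℝ) k ∘L .snd ℝ (E n) (E n)) p :=
    (ContinuousLinearMap.proj (R := ℝ) k ∘L .snd ℝ (E n) (E n)).hasFDerivAt
  have h := ((hd (hF₀.pdx i)).sub
    (.fun_sum (u := .univ) fun k _ => (hd ((hF₀.pdy i).pdx k)).mul (hy k))).sub
    (.fun_sum (u := .univ) fun k _ => (hd ((hF₀.pdy i).pdy k)).mul_const (w k))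
  simp only [eulerLagrangeForm_apply]
  refine (DFunLike.congr_fun h.fderiv u).trans ?_
  simp [mul_comm, add_comm]

theorem pdx_eulerLagrangeForm (hF : IsFinsler F) (hp : p ∈ slit n) (w : E n) (i s : Fin n) :
    pdx s (fun q => eulerLagrangeForm F q w i) p =
      pdx s (pdx i F) p - ∑ k, pdx s (pdx k (pdy i F)) p * p.2 k
        - ∑ k, pdx s (pdy k (pdy i F)) p * w k := by
  rw [pdx, fderiv_eulerLagrangeForm hF hp]
  simp [pdx]

theorem pdy_eulerLagrangeForm (hF : IsFinsler F) (hp : p ∈ slit n) (w : E n) (i s : Fin n) :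
    pdy s (fun q => eulerLagrangeForm F q w i) p =
      pdy s (pdx i F) p - pdy i (pdx s F) p
        - (∑ k, pdy s (pdx k (pdy i F)) p * p.2 k + ∑ k, pdy s (pdy k (pdy i F)) p * w k) := by
  rw [pdy, fderiv_eulerLagrangeForm hF hp, ← pdx_pdy_comm hF.smoothOnSlit hp i s]
  simp only [pdy, Finset.sum_add_distrib, Pi.single_apply, mul_ite, mul_one, mul_zero,
    Finset.sum_ite_eq', Finset.mem_univ, if_true]
  ring

/-- The Killing system is the linearized Euler–Lagrange equation along the second prolongation
of `X`. -/
theorem killingDefect_apply (hF : IsFinsler F) (hX : ContDiff ℝ 2 X) (hp : p ∈ slit n)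
    (w : E n) (i : Fin n) :
    killingDefect F X p w i =
      fderiv ℝ (fun q => eulerLagrangeForm F q w i) p (completeLift X p)
        - (fiberHessian F p *ᵥ accelField X p w) i := by
  have hmid (s : Fin n) : ∑ r, ((pdy s (pdx i F) p - pdy i (pdx s F) p) * p.2 r
      - pdy s (pdy i F) p * w r
      - ((∑ k, pdy s (pdx k (pdy i F)) p * p.2 k)
          + (∑ k, pdy s (pdy k (pdy i F)) p * w k)) * p.2 r) *
        fderiv ℝ X p.1 (Pi.single r 1) s =
      pdy s (fun q => eulerLagrangeForm F q w i) p * fderiv ℝ X p.1 p.2 s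
        - pdy s (pdy i F) p * ∑ r, w r * fderiv ℝ X p.1 (Pi.single r 1) s := by
    rw [pdy_eulerLagrangeForm hF hp, clm_apply_apply_eq_sum _ p.2, Finset.mul_sum,
      Finset.mul_sum, ← Finset.sum_sub_distrib]
    exact Finset.sum_congr rfl fun r _ => by ring
  rw [← Prod.mk.eta (p := completeLift X p), fderiv_apply_eq_sum]
  simp only [killingDefect, hmid, ← pdx_eulerLagrangeForm hF hp, Matrix.mulVec, dotProduct,
    accelField_apply hX, fiberHessian, Matrix.of_apply, mul_add, Finset.sum_add_distrib,
    Finset.sum_sub_distrib, Finset.mul_sum, completeLift, mul_assoc]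
  ring

theorem hasDerivAt_eulerLagrangeForm (hF : IsFinsler F) (hX : ContDiff ℝ 2 X)
    {q : ℝ → E n × E n} {w : ℝ → E n} {w' : E n} {s : ℝ} (hqs : q s ∈ slit n)
    (hq : HasDerivAt q (completeLift X (q s)) s) (hw : HasDerivAt w w' s) :
    HasDerivAt (fun σ => eulerLagrangeForm F (q σ) (w σ))
      (killingDefect F X (q s) (w s)
        - fiberHessian F (q s) *ᵥ (w' - accelField X (q s) (w s))) s := by
  have hF₀ := hF.smoothOnSlit
  refine hasDerivAt_pi.2 fun i => ?_
  have hsm : SmoothOnSlit fun p => eulerLagrangeForm F p (w s) i :=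
    (hF₀.pdx i).sub ((hF₀.pdy i).fderiv_apply (contDiff_snd.prodMk contDiff_const))
  have hjet := (hsm.differentiableAt hqs).hasFDerivAt.comp_hasDerivAt s hq
  have hHess (k : Fin n) := (((hF₀.pdy i).pdy k).differentiableAt hqs).hasFDerivAt.comp_hasDerivAt
    s hq |>.mul ((hasDerivAt_pi.1 hw k).sub_const (w s k))
  have hsplit : (fun σ => eulerLagrangeForm F (q σ) (w σ) i) = fun σ =>
      eulerLagrangeForm F (q σ) (w s) i
        - ∑ k, pdy k (pdy i F) (q σ) * (w σ k - w s k) := funext fun σ => by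
    rw [← add_sub_cancel (w s) (w σ), eulerLagrangeForm_add, add_sub_cancel]
    rfl
  rw [hsplit]
  refine (hjet.sub (.fun_sum (u := .univ) fun k _ => hHess k)).congr_deriv ?_
  rw [Matrix.mulVec_sub, Pi.sub_apply, Pi.sub_apply, killingDefect_apply hF hX hqs,
    sub_sub_sub_cancel_right]
  simp [Matrix.mulVec, dotProduct, fiberHessian]

end KillingSystem

section KillingSystemSolutions

variable {n : ℕ} {F : E n × E n → ℝ} {X : E n → E n} {φ : ℝ × E n → E n} {C : E n × E n → E n}
  {p : E n × E n}

theorem killingDefect_eq_fiberHessian_mulVec_liftBracket (hF : IsFinsler F) (hX : ContDiff ℝ 2 X)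
    (hC : ContDiffOn ℝ 1 C (slit n)) (hEL : ∀ q ∈ slit n, eulerLagrangeForm F q (C q) = 0)
    (hp : p ∈ slit n) :
    killingDefect F X p (C p) = fiberHessian F p *ᵥ liftBracket X C p := by
  let q : ℝ → E n × E n := fun t => p + t • completeLift X p
  have hq₀ : q 0 = p := by simp [q]
  have hq : HasDerivAt q (completeLift X p) 0 := hasDerivAt_add_smul p _
  have hCp : DifferentiableAt ℝ C p :=
    (hC.differentiableOn one_ne_zero).differentiableAt (slit_mem_nhds hp)
  have hzero : (fun t => eulerLagrangeForm F (q t) (C (q t))) =ᶠ[𝓝 0] fun _ => 0 :=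
    (hq.continuousAt.eventually_mem (hq₀.symm ▸ slit_mem_nhds hp)).mono fun t ht => hEL _ ht
  have hderiv := hasDerivAt_eulerLagrangeForm hF hX (hq₀.symm ▸ hp) (hq₀.symm ▸ hq)
    (hCp.hasFDerivAt.comp_hasDerivAt_of_eq 0 hq hq₀.symm)
  rw [Function.comp_apply, hq₀] at hderiv
  exact sub_eq_zero.1 (hderiv.unique ((hasDerivAt_const 0 0).congr_of_eventuallyEq hzero))

/-- `X` is a projective symmetry of the second-order field `(y, C)`. -/
theorem exists_liftBracket_eq_smul (hF : IsFinsler F) (hX : ContDiff ℝ 2 X)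
    (hC : ContDiffOn ℝ 1 C (slit n)) (hEL : ∀ q ∈ slit n, eulerLagrangeForm F q (C q) = 0)
    (hK : ∀ q ∈ slit n, killingDefect F X q (C q) = 0) :
    ∃ f : E n × E n → ℝ, ContinuousOn f (slit n) ∧ ∀ q ∈ slit n, liftBracket X C q = f q • q.2 := by
  have hdF : ContinuousOn (fderiv ℝ F) (slit n) :=
    hF.smoothOnSlit.continuousOn_fderiv_of_isOpen isOpen_slit (by simp)
  refine ⟨fun q => fderiv ℝ F q (0, liftBracket X C q) / F q,
    (hdF.clm_apply (continuousOn_const.prodMk (continuousOn_liftBracket isOpen_slit hX hC))).div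
      hF.smoothOnSlit.continuousOn fun q hq => hF.ne_zero hq, fun q hq => ?_⟩
  apply hF.eq_smul_of_fiberHessian_mulVec_eq_zero hq
  rw [← killingDefect_eq_fiberHessian_mulVec_liftBracket hF hX hC hEL hq, hK q hq]

theorem eulerLagrangeForm_add_smul_self (hF : IsFinsler F) (hp : p ∈ slit n) (w : E n) (c : ℝ) :
    eulerLagrangeForm F p (w + c • p.2) = eulerLagrangeForm F p w := by
  rw [eulerLagrangeForm_add, Matrix.mulVec_smul, hF.fiberHessian_mulVec_self hp, smul_zero,
    sub_zero]

theorem exists_sub_eq_smul_of_eulerLagrangeForm_eq (hF : IsFinsler F) (hp : p ∈ slit n)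
    {w w' : E n} (h : eulerLagrangeForm F p w = eulerLagrangeForm F p w') :
    ∃ c : ℝ, w - w' = c • p.2 := by
  refine ⟨_, hF.eq_smul_of_fiberHessian_mulVec_eq_zero hp ?_⟩
  rwa [← add_sub_cancel w' w, eulerLagrangeForm_add, sub_eq_self] at h

theorem eulerLagrangeForm_liftedFlow_eq_zero (hF : IsFinsler F) (h : IsFlow X φ)
    (hφ : ContDiff ℝ 3 φ) (hC : ContDiffOn ℝ 1 C (slit n))
    (hEL : ∀ q ∈ slit n, eulerLagrangeForm F q (C q) = 0)
    (hK : ∀ q ∈ slit n, killingDefect F X q (C q) = 0) (hp : p ∈ slit n) {w : E n}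
    (hw : eulerLagrangeForm F p w = 0) (s : ℝ) :
    eulerLagrangeForm F (liftedFlow φ (s, p)) (liftedAccel φ s p w) = 0 := by
  have hX : ContDiff ℝ 2 X := h.contDiff_field (hφ.of_le (by norm_num))
  have hφ₂ : ContDiff ℝ 2 φ := hφ.of_le (by norm_num)
  obtain ⟨f, hf, hbracket⟩ := exists_liftBracket_eq_smul hF hX hC hEL hK
  let P : ℝ → E n × E n := fun σ => liftedFlow φ (σ, p)
  have hP (σ : ℝ) : HasDerivAt P (completeLift X (P σ)) σ := (h.lift hφ₂).hasDerivAt σ p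
  have hPslit (σ : ℝ) : P σ ∈ slit n := h.liftedFlow_snd_ne_zero hφ₂ hp σ
  have hP₀ : P 0 = p := (h.lift hφ₂).map_zero p
  have hfP : Continuous fun σ => -f (P σ) :=
    (hf.comp_continuous (continuous_iff_continuousAt.2 fun σ => (hP σ).continuousAt) hPslit).neg
  have hv (σ : ℝ) : HasDerivAt (fun σ => liftedAccel φ σ p w - C (P σ))
      (fderiv ℝ X (φ (σ, p.1)) (liftedAccel φ σ p w - C (P σ)) + -f (P σ) • (P σ).2) σ := by
    refine (h.hasDerivAt_liftedAccel_sub hφ σ p w ((hC.differentiableOn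
      one_ne_zero).differentiableAt (slit_mem_nhds (hPslit σ)))).congr_deriv ?_
    rw [hbracket _ (hPslit σ), neg_smul, sub_eq_add_neg]
  obtain ⟨c₀, hc₀⟩ := exists_sub_eq_smul_of_eulerLagrangeForm_eq hF hp (hw.trans (hEL p hp).symm)
  obtain ⟨c, hc⟩ := exists_eq_smul_of_hasDerivAt_add_smul (h.continuous_fderiv_comp hφ₂ p.1) hfP
    (fun σ => (hasDerivAt_fst_snd (hP σ)).2) hv (c₀ := c₀)
    (by rw [h.liftedAccel_zero hφ, hP₀, hc₀]) s
  rw [sub_eq_iff_eq_add'.1 hc]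
  exact (eulerLagrangeForm_add_smul_self hF (hPslit s) _ c).trans (hEL _ (hPslit s))

theorem killingDefect_spray_eq_zero (hF : IsFinsler F) (h : IsFlow X φ) (hφ : ContDiff ℝ 3 φ)
    (hgeod : ∀ (γ : ℝ → E n) (t₁ t₂ : ℝ), IsGeodesic F γ t₁ t₂ →
      ∀ s, IsPregeodesic F (fun t => φ (s, γ t)) t₁ t₂)
    (hp : p ∈ slit n) : killingDefect F X p (spray F p) = 0 := by
  have hX : ContDiff ℝ 2 X := h.contDiff_field (hφ.of_le (by norm_num))
  have hlift := h.lift (hφ.of_le (by norm_num))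
  obtain ⟨γ, ε, hε, hγ, hjet, hacc⟩ := hF.exists_isGeodesic hp
  have hzero (s : ℝ) :
      eulerLagrangeForm F (liftedFlow φ (s, p)) (liftedAccel φ s p (spray F p)) = 0 := by
    have := (isPregeodesic_flow_iff h hφ hγ s).1 (hgeod γ _ _ hγ s) 0 (by simp [hε])
    rwa [hjet, hacc] at this
  have hderiv := hasDerivAt_eulerLagrangeForm hF hX (by rwa [hlift.map_zero])
    (hlift.hasDerivAt 0 p) (h.hasDerivAt_liftedAccel hφ 0 p (spray F p))
  simp only [hzero, sub_self, Matrix.mulVec_zero, sub_zero, hlift.map_zero,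
    h.liftedAccel_zero hφ] at hderiv
  exact hderiv.unique (hasDerivAt_const 0 0)

end KillingSystemSolutions

theorem statement8_general {n : ℕ} {F : E n × E n → ℝ} {X : E n → E n} {φ : ℝ × E n → E n}
    (hF : IsFinsler F) (h : IsFlow X φ) (hφ : ContDiff ℝ 3 φ) :
    (∀ (γ : ℝ → E n) (t₁ t₂ : ℝ), IsGeodesic F γ t₁ t₂ →
        ∀ s : ℝ, IsPregeodesic F (fun t => φ (s, γ t)) t₁ t₂) ↔
    (∃ C : Fin n → (E n × E n → ℝ), (∀ k, ContDiffOn ℝ ∞ (C k) (slit n)) ∧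
      (∀ (x y : E n), y ≠ 0 → ∀ i : Fin n,
        ∑ k, pdy k (pdy i F) (x, y) * C k (x, y) =
          pdx i F (x, y) - ∑ k, pdx k (pdy i F) (x, y) * y k) ∧
      ∀ (x y : E n), y ≠ 0 → ∀ i : Fin n,
        killingDefect F X (x, y) (fun k => C k (x, y)) i = 0) := by
  constructor
  · intro hgeod
    refine ⟨fun k p => spray F p k, contDiffOn_pi.1 hF.contDiffOn_spray, fun x y hy i => ?_,
      fun x y hy i => congrFun (killingDefect_spray_eq_zero hF h hφ hgeod hy) i⟩
    have hEL := congrFun (hF.eulerLagrangeForm_spray (p := (x, y)) hy) i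
    rw [eulerLagrangeForm_apply] at hEL
    exact (sub_eq_zero.1 hEL).symm
  · rintro ⟨C, hC, hEL, hK⟩ γ t₁ t₂ hγ s
    have hCvec : ContDiffOn ℝ 1 (fun p k => C k p) (slit n) :=
      contDiffOn_pi.2 fun k => (hC k).of_le (by simp)
    have hELvec : ∀ p ∈ slit n, eulerLagrangeForm F p (fun k => C k p) = 0 := fun p hp =>
      funext fun i => by
        rw [eulerLagrangeForm_apply, hEL p.1 p.2 hp i, sub_self, Pi.zero_apply]
    exact (isPregeodesic_flow_iff h hφ hγ s).2 fun t ht =>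
      eulerLagrangeForm_liftedFlow_eq_zero hF h hφ hCvec hELvec
        (fun p hp => funext (hK p.1 p.2 hp)) (hγ.vel t ht)
        (eulerLagrangeForm_of_isGeodesic hF hγ ht) s

/-- the flow of a smooth complete vector field `X` takes geodesics into
geodesics as point sets iff the components of `X` satisfy the second-order Killing-type
PDE system. -/
theorem statement8 {n : ℕ} (F : E n × E n → ℝ) (hF : IsFinsler F)
    (X : E n → E n) (hX : ContDiff ℝ (⊤ : ℕ∞) X)
    (φ : ℝ × E n → E n) (hφsmooth : ContDiff ℝ (⊤ : ℕ∞) φ)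
    (hφ0 : ∀ p : E n, φ (0, p) = p)
    (hflow : ∀ (s : ℝ) (p : E n),
      HasDerivAt (fun s' => φ (s', p)) (X (φ (s, p))) s) :
    (∀ (γ : ℝ → E n) (t₁ t₂ : ℝ), IsGeodesic F γ t₁ t₂ →
        ∀ s : ℝ, IsPregeodesic F (fun t => φ (s, γ t)) t₁ t₂) ↔
    (∃ C : Fin n → (E n × E n → ℝ),
      (∀ k : Fin n, ContDiffOn ℝ (⊤ : ℕ∞) (C k) {p : E n × E n | p.2 ≠ 0}) ∧
      (∀ (x y : E n), y ≠ 0 → ∀ i : Fin n,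
        ∑ k, pdy k (pdy i F) (x, y) * C k (x, y) =
          pdx i F (x, y) - ∑ k, pdx k (pdy i F) (x, y) * y k) ∧
      ∀ (x y : E n), y ≠ 0 → ∀ i : Fin n,
        (∑ s, (pdx s (pdx i F) (x, y)
            - (∑ k, pdx s (pdx k (pdy i F)) (x, y) * y k)
            - (∑ k, pdx s (pdy k (pdy i F)) (x, y) * C k (x, y))) * X x s)
        + (∑ s, ∑ r,
            ((pdy s (pdx i F) (x, y) - pdy i (pdx s F) (x, y)) * y r
              - pdy s (pdy i F) (x, y) * C r (x, y)
              - ((∑ k, pdy s (pdx k (pdy i F)) (x, y) * y k)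
                  + (∑ k, pdy s (pdy k (pdy i F)) (x, y) * C k (x, y))) * y r) *
            fderiv ℝ X x (Pi.single r 1) s)
        - (∑ s, ∑ m, ∑ r,
            pdy s (pdy i F) (x, y) * y m * y r *
              fderiv ℝ (fun x' => fderiv ℝ X x' (Pi.single r 1) s) x (Pi.single m 1))
        = 0) :=
  statement8_general hF ⟨hφ0, hflow⟩ (hφsmooth.of_le ENat.LEInfty.out)
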